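/- Let (μₙ) be positive reals with μₙ → 0 and √n·μₙ → ∞, and let (θₙ) satisfy θₙ/μₙ → ζ with |ζ| = 1 and √n(μₙ - ζθₙ) → r ∈ ℝ. Then Φ(√n(μₙ - θₙ)) - Φ(√n(-μₙ - θₙ)) → Φ(r) as n → ∞. -/

import Mathlib

open ProbabilityTheory Filter

/-- Standard normal cdf. -/
noncomputable def Phi (x : ℝ) : ℝ := cdf (gaussianReal 0 1) x

/-!
The boundary condition makes one of the two arguments converge, to `r` if `ζ = 1` and to `-r` if
`ζ = -1`, while the other one, at distance `2 √n μₙ → ∞`, escapes to `-∞` or `∞` respectively.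
The limit is thus `Φ(r) - 0` or `1 - Φ(-r)`, and these agree by the symmetry of the normal law.
-/

section Cdf

open MeasureTheory Set

variable (ν : Measure ℝ) [IsProbabilityMeasure ν] {x : ℝ}

theorem continuousAt_cdf_iff : ContinuousAt (cdf ν) x ↔ ν {x} = 0 := by
  have leftLim_le : Function.leftLim (cdf ν) x ≤ cdf ν x := (monotone_cdf ν).leftLim_le le_rfl
  have measure_singleton_eq : ν {x} = ENNReal.ofReal (cdf ν x - Function.leftLim (cdf ν) x) := by
    rw [← StieltjesFunction.measure_singleton, measure_cdf]
  rw [(monotone_cdf ν).continuousAt_iff_leftLim_eq_rightLim, StieltjesFunction.rightLim_eq,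
    measure_singleton_eq, ENNReal.ofReal_eq_zero, sub_nonpos, leftLim_le.ge_iff_eq]

theorem cdf_neg [ν.IsNegInvariant] (hx : ν {x} = 0) : cdf ν (-x) = 1 - cdf ν x :=
  calc cdf ν (-x) = ν.real (Iic (-x)) := cdf_eq_real ν (-x)
    _ = ν.real (Ici x) := by
      rw [← neg_Ici, measureReal_def, Measure.measure_neg, measureReal_def]
    _ = 1 - ν.real (Iio x) := by rw [← compl_Iio, probReal_compl_eq_one_sub measurableSet_Iio]
    _ = 1 - cdf ν x := by rw [measureReal_congr (Iio_ae_eq_Iic' hx), cdf_eq_real]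

end Cdf

instance isNegInvariant_gaussianReal (v : NNReal) : (gaussianReal 0 v).IsNegInvariant where
  neg_eq_self := gaussianReal_map_neg.trans (by rw [neg_zero])

theorem stmt5_general {ι : Type*} {l : Filter ι} {ν : MeasureTheory.Measure ℝ}
    [MeasureTheory.IsProbabilityMeasure ν] [ν.IsNegInvariant] {s μ θ : ι → ℝ} {ζ r : ℝ}
    (hνr : ν {r} = 0) (hζ : |ζ| = 1) (hsμ : Tendsto (fun i => s i * μ i) l atTop)
    (hr : Tendsto (fun i => s i * (μ i - ζ * θ i)) l (nhds r)) :
    Tendsto (fun i => cdf ν (s i * (μ i - θ i)) - cdf ν (s i * (-(μ i) - θ i))) l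
      (nhds (cdf ν r)) := by
  have hgap : Tendsto (fun i => 2 * (s i * μ i)) l atTop := hsμ.const_mul_atTop two_pos
  obtain rfl | rfl := (abs_eq zero_le_one).1 hζ
  · have hupper : Tendsto (fun i => s i * (μ i - θ i)) l (nhds r) := by
      simpa only [one_mul] using hr
    have hlower : Tendsto (fun i => s i * (-(μ i) - θ i)) l atBot :=
      (hupper.add_atBot (tendsto_neg_atTop_atBot.comp hgap)).congr fun i => by
        rw [Function.comp_apply]
        ring
    have hcont : ContinuousAt (cdf ν) r := (continuousAt_cdf_iff ν).2 hνr
    rw [← sub_zero (cdf ν r)]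
    exact (hcont.tendsto.comp hupper).sub ((tendsto_cdf_atBot ν).comp hlower)
  · have hlower : Tendsto (fun i => s i * (-(μ i) - θ i)) l (nhds (-r)) :=
      hr.neg.congr fun i => by ring
    have hupper : Tendsto (fun i => s i * (μ i - θ i)) l atTop :=
      (hlower.add_atTop hgap).congr fun i => by ring
    have hcont : ContinuousAt (cdf ν) (-r) := by
      rwa [continuousAt_cdf_iff, ← Set.neg_singleton, ν.measure_neg]
    have hlimit : cdf ν r = 1 - cdf ν (-r) := by rw [cdf_neg ν hνr, sub_sub_cancel]
    rw [hlimit]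
    exact ((tendsto_cdf_atTop ν).comp hupper).sub (hcont.tendsto.comp hlower)

/-- consistent tuning, boundary case: if `μₙ → 0`, `√n μₙ → ∞`,
`θₙ/μₙ → ζ` with `|ζ| = 1`, and `√n(μₙ - ζ θₙ) → r ∈ ℝ`, then
`Φ(√n(μₙ-θₙ)) - Φ(√n(-μₙ-θₙ)) → Φ(r)`. -/
theorem stmt5 (μ θ : ℕ → ℝ) (ζ r : ℝ) (hζ : |ζ| = 1) (hμpos : ∀ n, 0 < μ n)
    (hμ0 : Tendsto μ atTop (nhds 0))
    (hmuinf : Tendsto (fun n : ℕ => Real.sqrt n * μ n) atTop atTop)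
    (hθζ : Tendsto (fun n : ℕ => θ n / μ n) atTop (nhds ζ))
    (hr : Tendsto (fun n : ℕ => Real.sqrt n * (μ n - ζ * θ n)) atTop (nhds r)) :
    Tendsto
      (fun n : ℕ =>
        Phi (Real.sqrt n * (μ n - θ n)) - Phi (Real.sqrt n * (-(μ n) - θ n)))
      atTop (nhds (Phi r)) := by
  have := nullSingletonClass_gaussianReal (μ := 0) one_ne_zero
  exact stmt5_general (MeasureTheory.measure_singleton r) hζ hmuinf hr
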